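/- arXiv:1308.1069 — 2 statements merged into one kernel-verified Lean document; each statement's English description precedes it below -/
import Mathlib

section
/- There exists a universal constant C > 0 (independent of the graph and the group) such that the following holds. Suppose V is finite. If E ⊆ V satisfies |E| ≤ Γ(r) for some real r ≥ 1, then for every subset A ⊆ V with |A| ≤ |V|/2 one has |A ∩ E| ≤ C · r · ‖∂A‖, where ‖∂A‖ is the edge-perimeter of A. -/
/-!
Averaging `|1_A (g o) - 1_A (g z)|` over all automorphisms `g` and telescoping along a geodesic
from `o` to `z` costs at most `dist o z` times the perimeter of `A`, because orbit sums do not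
depend on the base point (`sum_orbit_eq`). Averaging also over `z` in a ball of radius `s` with
at least `2 |A|` points gives `|A| ≤ 2 s ‖∂A‖` (`ncard_le_of_half_ball`): any translate of the
ball has at least half of its points outside `A`.

Take the least such `s`, which exists because `|A| ≤ |V| / 2`, and let `k = ⌈r⌉ - 1`. When
`s ≤ 2 k` the bound `|A ∩ E| ≤ |A|` suffices. Otherwise the ball of radius `s - 1` has fewer than
`2 |A|` points and is not all of `V`, so it contains about `s / (2 k + 1)` disjoint balls of
radius `k` (`linear_growth`). Hence `|E| ≤ Γ(r) ≲ (r / s) |A| ≲ r ‖∂A‖`.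
-/


open scoped BigOperators

/-- The (modulus of the) graph gradient: `|∇f|(m) = ∑_{n ∼ m} |f(m) - f(n)|`. -/
noncomputable def gradAbs {V : Type} (G : SimpleGraph V) (f : V → ℝ) (m : V) : ℝ :=
  ∑ᶠ n ∈ G.neighborSet m, |f m - f n|

/-- The edge-perimeter `‖∂A‖ = ∑_{m ∈ V} |∇1_A|(m)` of a set of vertices. -/
noncomputable def edgePerim {V : Type} (G : SimpleGraph V) (A : Set V) : ℝ :=
  ∑ᶠ m, gradAbs G (A.indicator (fun _ => (1 : ℝ))) m


/-- The closed ball of radius `k` around `o` in a finite graph. Real radii reduce to natural ones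
because the graph distance is integer valued. -/
noncomputable def cball {V : Type} [Fintype V] (G : SimpleGraph V) (o : V) (k : ℕ) : Finset V :=
  by classical exact Finset.univ.filter (fun n => G.dist o n ≤ k)

theorem mem_cball {V : Type} [Fintype V] (G : SimpleGraph V) (o n : V) (k : ℕ) :
    n ∈ cball G o k ↔ G.dist o n ≤ k := by
  classical
  simp [cball]

theorem iso_dist_le {V : Type} {G : SimpleGraph V} (hc : G.Connected) (φ : G ≃g G) (u v : V) :
    G.dist (φ u) (φ v) ≤ G.dist u v := by
  obtain ⟨w, hw⟩ := hc.exists_walk_length_eq_dist u v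
  have := SimpleGraph.dist_le (w.map φ.toHom)
  rw [SimpleGraph.Walk.length_map, hw] at this
  exact this

theorem iso_dist {V : Type} {G : SimpleGraph V} (hc : G.Connected) (φ : G ≃g G) (u v : V) :
    G.dist (φ u) (φ v) = G.dist u v := by
  refine le_antisymm (iso_dist_le hc φ u v) ?_
  simpa using iso_dist_le hc φ.symm (φ u) (φ v)

theorem card_cball_eq {V : Type} [Fintype V] {G : SimpleGraph V} (hc : G.Connected)
    (ht : ∀ u v : V, ∃ φ : G ≃g G, φ u = v) (u v : V) (k : ℕ) :
    (cball G u k).card = (cball G v k).card := by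
  obtain ⟨φ, rfl⟩ := ht u v
  refine Finset.card_bij (fun x _ => φ x) ?_ (fun a _ b _ h => φ.injective h) ?_
  · intro a ha
    rw [mem_cball] at ha ⊢
    rwa [iso_dist hc]
  · intro b hb
    refine ⟨φ.symm b, ?_, by simp⟩
    rw [mem_cball] at hb ⊢
    rw [← iso_dist hc φ]
    simpa using hb

theorem exists_dist_eq_of_le {V : Type} {G : SimpleGraph V} (hc : G.Connected) (n : ℕ)
    {x o : V} (w : G.Walk x o) (h : n ≤ G.dist o x) : ∃ y, G.dist o y = n := by
  induction w with
  | nil => exact ⟨_, le_antisymm (by simp) h⟩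
  | @cons x x' o hadj w ih =>
    by_cases hn : G.dist o x = n
    · exact ⟨x, hn⟩
    · apply ih
      have h1 := hc.dist_triangle (u := o) (v := x') (w := x)
      have h2 : G.dist x' x = 1 := SimpleGraph.dist_eq_one_iff_adj.2 hadj.symm
      omega

/-- Growth is at least linear up to the diameter: the balls of radius `k` around points at
distances `0, 2k+1, 2(2k+1), …` from `o` lie in disjoint annuli. -/
theorem linear_growth {V : Type} [Fintype V] {G : SimpleGraph V} (hc : G.Connected)
    (ht : ∀ u v : V, ∃ φ : G ≃g G, φ u = v) (o x : V) (k J : ℕ)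
    (h : J * (2 * k + 1) ≤ G.dist o x) :
    (J + 1) * (cball G o k).card ≤ (cball G o (J * (2 * k + 1) + k)).card := by
  classical
  induction J with
  | zero => simp
  | succ J ih =>
    obtain ⟨w⟩ := hc.preconnected x o
    obtain ⟨y, hy⟩ := exists_dist_eq_of_le hc _ w h
    have e : (J + 1) * (2 * k + 1) = J * (2 * k + 1) + (2 * k + 1) := by ring
    have ih' := ih (by omega)
    have hd : Disjoint (cball G o (J * (2 * k + 1) + k)) (cball G y k) := by
      rw [Finset.disjoint_left]
      intro z hz hz'
      rw [mem_cball] at hz hz'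
      have h1 := hc.dist_triangle (u := o) (v := z) (w := y)
      rw [SimpleGraph.dist_comm (u := z)] at h1
      omega
    have hs : cball G o (J * (2 * k + 1) + k) ∪ cball G y k ⊆
        cball G o ((J + 1) * (2 * k + 1) + k) := by
      intro z hz
      rw [Finset.mem_union, mem_cball, mem_cball] at hz
      rw [mem_cball]
      have h1 := hc.dist_triangle (u := o) (v := y) (w := z)
      omega
    have h2 := Finset.card_le_card hs
    rw [Finset.card_union_of_disjoint hd, card_cball_eq hc ht y o k] at h2
    calc (J + 1 + 1) * (cball G o k).card
        = (J + 1) * (cball G o k).card + (cball G o k).card := by ring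
      _ ≤ _ := by omega

/-- Orbit averages do not depend on the base point, by translation invariance of counting
measure on the automorphism group. -/
theorem sum_orbit_eq {V : Type} {G : SimpleGraph V} [Fintype (G ≃g G)]
    (ht : ∀ u v : V, ∃ φ : G ≃g G, φ u = v) (F : V → ℝ) (u v : V) :
    ∑ g : G ≃g G, F (g u) = ∑ g : G ≃g G, F (g v) := by
  obtain ⟨φ, rfl⟩ := ht u v
  exact (Fintype.sum_equiv (Equiv.mulRight φ) (fun g : G ≃g G => F (g (φ u)))
    (fun g => F (g u)) (fun g => rfl)).symm

theorem card_mul_sum_orbit {V : Type} [Fintype V] {G : SimpleGraph V} [Fintype (G ≃g G)]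
    (ht : ∀ u v : V, ∃ φ : G ≃g G, φ u = v) (F : V → ℝ) (o : V) :
    (Fintype.card V : ℝ) * ∑ g : G ≃g G, F (g o) = Fintype.card (G ≃g G) * ∑ m, F m := by
  have h1 : ∑ u : V, ∑ g : G ≃g G, F (g u) = (Fintype.card V : ℝ) * ∑ g : G ≃g G, F (g o) := by
    rw [Finset.sum_congr rfl (fun u _ => sum_orbit_eq ht F u o)]
    simp
  rw [← h1, Finset.sum_comm, Finset.sum_congr rfl
    (fun (g : G ≃g G) _ => Fintype.sum_equiv g.toEquiv (fun u => F (g u)) F (fun u => rfl))]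
  simp

theorem gradAbs_nonneg {V : Type} (G : SimpleGraph V) (f : V → ℝ) (m : V) : 0 ≤ gradAbs G f m :=
  finsum_nonneg fun _ => finsum_nonneg fun _ => abs_nonneg _

theorem abs_sub_le_gradAbs {V : Type} [Finite V] {G : SimpleGraph V} (f : V → ℝ) {u v : V}
    (h : G.Adj u v) : |f u - f v| ≤ gradAbs G f u := by
  have hf : (G.neighborSet u).Finite := Set.toFinite _
  rw [gradAbs, finsum_mem_eq_finite_toFinset_sum _ hf]
  exact Finset.single_le_sum (f := fun n => |f u - f n|) (fun i _ => abs_nonneg _)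
    (by simpa using h)

/-- Telescoping along a walk: each step costs one orbit sum of the gradient. -/
theorem sum_abs_sub_le {V : Type} [Finite V] {G : SimpleGraph V} [Fintype (G ≃g G)]
    (ht : ∀ u v : V, ∃ φ : G ≃g G, φ u = v) (f : V → ℝ) (o : V) {u v : V} (w : G.Walk u v) :
    ∑ g : G ≃g G, |f (g u) - f (g v)| ≤ w.length * ∑ g : G ≃g G, gradAbs G f (g o) := by
  induction w with
  | nil => simp
  | @cons u x v hadj w ih =>
    have h1 : ∑ g : G ≃g G, |f (g u) - f (g x)| ≤ ∑ g : G ≃g G, gradAbs G f (g u) :=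
      Finset.sum_le_sum fun g _ => abs_sub_le_gradAbs f (g.map_adj_iff.2 hadj)
    rw [sum_orbit_eq ht (gradAbs G f) u o] at h1
    have h2 : ∑ g : G ≃g G, |f (g u) - f (g v)| ≤
        ∑ g : G ≃g G, |f (g u) - f (g x)| + ∑ g : G ≃g G, |f (g x) - f (g v)| := by
      rw [← Finset.sum_add_distrib]
      exact Finset.sum_le_sum fun g _ => abs_sub_le _ _ _
    rw [SimpleGraph.Walk.length_cons]
    push_cast
    linarith

/-- The basic isoperimetric inequality: a set filling at most half of a ball of radius `s` has
at most `2 s` times as many points as its perimeter. -/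
theorem ncard_le_of_half_ball {V : Type} [Fintype V] {G : SimpleGraph V} (hc : G.Connected)
    (ht : ∀ u v : V, ∃ φ : G ≃g G, φ u = v) (A : Set V) (o : V) (s : ℕ)
    (hs : 2 * A.ncard ≤ (cball G o s).card) :
    (A.ncard : ℝ) ≤ 2 * s * edgePerim G A := by
  classical
  have : Finite (G ≃g G) := Finite.of_injective (fun g : G ≃g G => (g : V → V)) DFunLike.coe_injective
  have := Fintype.ofFinite (G ≃g G)
  set f : V → ℝ := A.indicator (fun _ => (1 : ℝ)) with hf
  set P := ∑ g : G ≃g G, gradAbs G f (g o) with hP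
  set b := (cball G o s).card with hb
  have hP0 : 0 ≤ P := Finset.sum_nonneg fun g _ => gradAbs_nonneg G f _
  have hA : ∑ m, f m = A.ncard := by
    simp [hf, Set.indicator_apply, Set.ncard_eq_toFinset_card', Set.toFinset]
  have hbpos : 0 < (b : ℝ) := by
    have : 0 < b := Finset.card_pos.2 ⟨o, by simp [mem_cball]⟩
    exact_mod_cast this
  have upper : ∑ z ∈ cball G o s, ∑ g : G ≃g G, |f (g o) - f (g z)| ≤ b * (s * P) := by
    rw [← nsmul_eq_mul]
    refine Finset.sum_le_card_nsmul _ _ _ fun z hz => ?_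
    obtain ⟨w, hw⟩ := hc.exists_walk_length_eq_dist o z
    refine (sum_abs_sub_le ht f o w).trans ?_
    have : (w.length : ℝ) ≤ s := by
      rw [hw]; exact_mod_cast (mem_cball G o z s).1 hz
    exact mul_le_mul_of_nonneg_right this hP0
  have lower : ∀ g : G ≃g G, f (g o) * (b / 2) ≤ ∑ z ∈ cball G o s, |f (g o) - f (g z)| := by
    intro g
    by_cases hg : g o ∈ A
    · have h1 : f (g o) = 1 := by simp [hf, hg]
      rw [h1]
      have hbnd : ∀ z ∈ cball G o s, 1 - f (g z) ≤ |1 - f (g z)| := fun z _ => le_abs_self _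
      have h2 := Finset.sum_le_sum hbnd
      have h3 : ∑ z ∈ cball G o s, f (g z) ≤ A.ncard := by
        calc ∑ z ∈ cball G o s, f (g z) ≤ ∑ z, f (g z) :=
              Finset.sum_le_sum_of_subset_of_nonneg (Finset.subset_univ _)
                fun z _ _ => Set.indicator_nonneg (by simp) _
          _ = ∑ z, f z := Fintype.sum_equiv g.toEquiv _ _ fun _ => rfl
          _ = A.ncard := hA
      have h4 : (2 * A.ncard : ℝ) ≤ b := by exact_mod_cast hs
      rw [Finset.sum_sub_distrib] at h2
      simp only [Finset.sum_const, nsmul_eq_mul, mul_one] at h2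
      rw [← hb] at h2
      linarith
    · have h1 : f (g o) = 0 := by simp [hf, hg]
      rw [h1, zero_mul]
      exact Finset.sum_nonneg fun _ _ => abs_nonneg _
  have hmain : (∑ g : G ≃g G, f (g o)) * (b / 2) ≤ b * (s * P) := by
    rw [Finset.sum_mul]
    refine (Finset.sum_le_sum fun g _ => lower g).trans ?_
    rw [Finset.sum_comm]
    exact upper
  have hmain2 : ∑ g : G ≃g G, f (g o) ≤ 2 * s * P := by
    refine le_of_mul_le_mul_right ?_ hbpos
    linarith
  have hE : edgePerim G A = ∑ m, gradAbs G f m := finsum_eq_sum_of_fintype _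
  have hV : (0 : ℝ) ≤ Fintype.card V := Nat.cast_nonneg _
  have hN : (0 : ℝ) < Fintype.card (G ≃g G) := by
    exact_mod_cast Fintype.card_pos_iff.2 ⟨(1 : G ≃g G)⟩
  have e1 := card_mul_sum_orbit ht f o
  have e2 := card_mul_sum_orbit ht (gradAbs G f) o
  rw [hA] at e1
  rw [← hE, ← hP] at e2
  have h5 := mul_le_mul_of_nonneg_left hmain2 hV
  refine le_of_mul_le_mul_left ?_ hN
  calc _ = _ := e1.symm
    _ ≤ _ := h5
    _ = 2 * s * (Fintype.card V * P) := by ring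
    _ = _ := by rw [e2]; ring

/-- Weak isoperimetric inequality, stronger (decoupled) form, discrete finite case:
there is a universal constant `C > 0` such that on every connected, locally finite,
vertex-transitive graph with finite vertex set, if `E ⊆ V` has cardinality at most
that of a ball of radius `r` (for some real `r ≥ 1`), then `|A ∩ E| ≤ C r ‖∂A‖` for
every subset `A ⊆ V` with `|A| ≤ |V|/2`. -/
theorem discrete_weak_isoperimetric_decoupled_finite :
    ∃ C : ℝ, 0 < C ∧
      ∀ (V : Type) (G : SimpleGraph V), Countable V → G.Connected →
        (∀ v : V, (G.neighborSet v).Finite) →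
        (∀ u v : V, ∃ φ : G ≃g G, φ u = v) →
        Finite V →
        ∀ (E : Set V) (r : ℝ), 1 ≤ r →
        (∀ m₀ : V, E.ncard ≤ {n | (G.dist m₀ n : ℝ) < r}.ncard) →
        ∀ A : Set V, (A.ncard : ℝ) ≤ (Nat.card V : ℝ) / 2 →
          ((A ∩ E).ncard : ℝ) ≤ C * r * edgePerim G A := by
  refine ⟨24, by norm_num, ?_⟩
  intro V G _ hc _ ht hfin E r hr hE A hA
  classical
  have := Fintype.ofFinite V
  obtain ⟨o⟩ := hc.nonempty
  have hP0 : 0 ≤ edgePerim G A :=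
    finsum_nonneg fun m => gradAbs_nonneg G _ m
  -- An open ball of real radius `r` is the closed ball of radius `⌈r⌉ - 1 < r`.
  obtain ⟨k, hk⟩ : ∃ k, ⌈r⌉₊ = k + 1 :=
    Nat.exists_eq_succ_of_ne_zero (Nat.ceil_pos.2 (by linarith)).ne'
  have hkr : (k : ℝ) < r := Nat.lt_ceil.1 (by omega)
  have hEk : E.ncard ≤ (cball G o k).card := by
    refine (hE o).trans (le_of_eq ?_)
    rw [← Set.ncard_coe_finset]
    congr 1
    ext n
    rw [Finset.mem_coe, mem_cball, Set.mem_ofPred_eq, ← Nat.lt_ceil, hk]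
    omega
  have hA2 : 2 * A.ncard ≤ Fintype.card V := by
    rw [Nat.card_eq_fintype_card] at hA
    have : (2 * A.ncard : ℝ) ≤ Fintype.card V := by linarith
    exact_mod_cast this
  have hex : ∃ s, 2 * A.ncard ≤ (cball G o s).card := by
    refine ⟨Finset.univ.sup (G.dist o), ?_⟩
    rw [Finset.eq_univ_of_forall (s := cball G o _)
      fun n => (mem_cball G o n _).2 (Finset.le_sup (Finset.mem_univ n))]
    exact hA2
  obtain ⟨s, hs, hmin⟩ : ∃ s, 2 * A.ncard ≤ (cball G o s).card ∧
      ∀ t < s, (cball G o t).card < 2 * A.ncard :=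
    ⟨Nat.find hex, Nat.find_spec hex, fun t h => not_le.1 (Nat.find_min hex h)⟩
  have hiso := ncard_le_of_half_ball hc ht A o s hs
  have hAE : ((A ∩ E).ncard : ℝ) ≤ A.ncard := by
    exact_mod_cast Set.ncard_le_ncard Set.inter_subset_left
  have hEA : ((A ∩ E).ncard : ℝ) ≤ (cball G o k).card := by
    exact_mod_cast (Set.ncard_le_ncard Set.inter_subset_right).trans hEk
  by_cases hsk : s ≤ 2 * k
  · have h1 : (s : ℝ) ≤ 2 * k := by exact_mod_cast hsk
    have h2 : 2 * (s : ℝ) * edgePerim G A ≤ 24 * r * edgePerim G A :=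
      mul_le_mul_of_nonneg_right (by linarith) hP0
    linarith
  · -- Here `|A|` exceeds half of a ball of radius `s - 1`, which by linear growth is at least
    -- of order `s / k` times the size of a ball of radius `k`.
    set J := (s - 1 - k) / (2 * k + 1) with hJ
    have hJ1 : J * (2 * k + 1) ≤ s - 1 - k := Nat.div_mul_le_self _ _
    have hJ2 : s - 1 - k < (J + 1) * (2 * k + 1) := by
      rw [mul_comm]; exact Nat.lt_mul_div_succ _ (by omega)
    have hlt := hmin (s - 1) (by omega)
    obtain ⟨x, hx⟩ : ∃ x, x ∉ cball G o (s - 1) := by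
      by_contra! hall
      rw [Finset.eq_univ_of_forall hall, Finset.card_univ] at hlt
      omega
    rw [mem_cball] at hx
    have hgrow := linear_growth hc ht o x k J (by omega)
    have hmono : (cball G o (J * (2 * k + 1) + k)).card ≤ (cball G o (s - 1)).card := by
      refine Finset.card_le_card fun z hz => ?_
      rw [mem_cball] at hz ⊢
      omega
    have hb : ((J + 1 : ℕ) : ℝ) * (cball G o k).card ≤ 2 * A.ncard := by
      exact_mod_cast (hgrow.trans hmono).trans hlt.le
    have hsJ : (s : ℝ) ≤ 2 * (2 * k + 1) * (J + 1 : ℕ) := by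
      have : s ≤ 2 * ((J + 1) * (2 * k + 1)) := by omega
      calc (s : ℝ) ≤ ((2 * ((J + 1) * (2 * k + 1)) : ℕ) : ℝ) := by exact_mod_cast this
        _ = _ := by push_cast; ring
    have hspos : (0 : ℝ) < s := by
      have : 0 < s := by omega
      exact_mod_cast this
    have hball : ((cball G o k).card : ℝ) ≤ 8 * (2 * k + 1) * edgePerim G A := by
      refine le_of_mul_le_mul_left ?_ hspos
      calc (s : ℝ) * (cball G o k).card
          ≤ 2 * (2 * k + 1) * (J + 1 : ℕ) * (cball G o k).card :=
            mul_le_mul_of_nonneg_right hsJ (Nat.cast_nonneg _)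
        _ = 2 * (2 * k + 1) * ((J + 1 : ℕ) * (cball G o k).card) := by ring
        _ ≤ 2 * (2 * k + 1) * (2 * (2 * s * edgePerim G A)) :=
            mul_le_mul_of_nonneg_left (by linarith) (by positivity)
        _ = _ := by ring
    have h2 : 8 * (2 * (k : ℝ) + 1) * edgePerim G A ≤ 24 * r * edgePerim G A :=
      mul_le_mul_of_nonneg_right (by linarith) hP0
    linarith
end

section
/- There exists a universal constant C > 0 (independent of the graph and the group) such that the following holds. Suppose V is finite. If E ⊆ V satisfies |E| ≤ Γ(r) for some real r ≥ 1, then for every f : V → ℝ one has Σ_{m∈E} |f(m) − m₀| ≤ C · r · Σ_{m∈V} |∇f|(m), where m₀ := inf{t ∈ ℝ : |{m ∈ V : f(m) ≤ t}| ≥ |V|/2} is the median of f. -/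
/-!
The proof combines an isoperimetric inequality with a bound for the growth of balls.

Averaging `|1_A(φ o) - 1_A(φ y)|` over all automorphisms `φ` and telescoping along a geodesic from
`o` to `y` bounds it by `d(o, y)` times the size of the edge boundary of `A`, suitably normalised
(`transport_walk`). Summing over `y` in a ball whose volume `Γ(R)` is at least `2|A|` gives
`|A| ≤ 2 R |∂A|` (`isoperimetric`).

Placing balls of radius `k` along a geodesic of length `R` shows `R Γ(k) ≤ 3 k Γ(R)` whenever
`k ≤ R` and `R` does not exceed the diameter (`growth`). For `2|A| ≤ |V|` and `|E| ≤ Γ(k)`, take the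
least `R` with `Γ(R) ≥ 2|A|`. If `R ≤ k`, then `|A ∩ E| ≤ |A|` is at most `2 k |∂A|`. Otherwise
`|E| ≤ Γ(k)` is bounded by a multiple of `(k / R) Γ(R - 1)`, hence of `(k / R) |A|`, hence of
`k |∂A|`. In both cases `|A ∩ E| ≤ 24 k |∂A|` (`indicator_estimate`).

Peeling off level sets extends this to nonnegative functions supported on at most half of the
vertices (`coarea_estimate`). The positive and negative parts of `f - m₀` are such functions, by the
choice of the median, and both `|f - m₀|` and the gradient are additive over the two parts.
-/

open scoped BigOperators

/-- The median `m₀ = inf {t ∈ ℝ : |{m : f(m) ≤ t}| ≥ |V|/2}` of `f : V → ℝ`. -/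
noncomputable def median {V : Type} (f : V → ℝ) : ℝ :=
  sInf {t : ℝ | (Nat.card V : ℝ) / 2 ≤ ({m | f m ≤ t}.ncard : ℝ)}

section FiniteGraph

open Classical in
/-- The total gradient `∑_m |∇f|(m)`, as a sum over the ordered pairs of adjacent vertices of a
finite graph; every edge is counted twice. -/
noncomputable def totalGrad {V : Type} [Fintype V] (G : SimpleGraph V) (f : V → ℝ) : ℝ :=
  ∑ m, ∑ n, if G.Adj m n then |f m - f n| else 0

open Classical in
/-- The open ball `{n : d(o, n) < k}` of integer radius, as a finset. -/
noncomputable def ballF {V : Type} [Fintype V] (G : SimpleGraph V) (o : V) (k : ℕ) : Finset V :=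
  Finset.univ.filter fun n => G.dist o n < k

open Classical in
/-- The indicator function of a finset, with real values. -/
noncomputable def ind {V : Type} (A : Finset V) (v : V) : ℝ := if v ∈ A then 1 else 0

variable {V : Type} {G : SimpleGraph V}

/-! ### Balls -/

lemma dist_iso_le (hc : G.Connected) (φ : G ≃g G) (u v : V) :
    G.dist (φ u) (φ v) ≤ G.dist u v := by
  obtain ⟨p, hp⟩ := hc.exists_walk_length_eq_dist u v
  rw [← hp]
  simpa using SimpleGraph.dist_le (p.map φ.toHom)

lemma dist_iso (hc : G.Connected) (φ : G ≃g G) (u v : V) :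
    G.dist (φ u) (φ v) = G.dist u v :=
  le_antisymm (dist_iso_le hc φ u v) (by simpa using dist_iso_le hc φ.symm (φ u) (φ v))

/-- Discrete intermediate value theorem: along a walk the distance to `o` changes by at most one
per step. -/
lemma exists_vertex_dist_eq (hc : G.Connected) (o : V) {u v : V} (p : G.Walk u v) (i : ℕ)
    (hu : G.dist o u ≤ i) (hv : i ≤ G.dist o v) : ∃ x, G.dist o x = i := by
  induction p with
  | nil => exact ⟨_, le_antisymm hu hv⟩
  | @cons a b c h p ih =>
    by_cases h1 : G.dist o a = i
    · exact ⟨_, h1⟩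
    · refine ih ?_ hv
      have := hc.dist_triangle (u := o) (v := a) (w := b)
      rw [SimpleGraph.dist_eq_one_iff_adj.2 h] at this
      omega

variable [Fintype V]

lemma mem_ballF {o n : V} {k : ℕ} : n ∈ ballF G o k ↔ G.dist o n < k := by
  simp [ballF]

lemma card_ballF_eq (hc : G.Connected) (ht : ∀ u v : V, ∃ φ : G ≃g G, φ u = v) (o x : V) (k : ℕ) :
    (ballF G x k).card = (ballF G o k).card := by
  obtain ⟨φ, rfl⟩ := ht o x
  symm
  refine Finset.card_bij' (fun v _ => φ v) (fun v _ => φ.symm v) ?_ ?_ ?_ ?_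
  · intro v hv
    rw [mem_ballF] at hv ⊢
    rwa [dist_iso hc]
  · intro v hv
    rw [mem_ballF] at hv ⊢
    rw [← dist_iso hc φ]
    simpa using hv
  · simp
  · simp

/-- Below the diameter, the volume growth is at least linear up to a factor three. Take `x i` at
distance `i` from `o`; the balls `B(x i, k)` with `i ≤ R - k` lie in `B(o, R)` and a point of
`B(o, R)` belongs to at most `2 k` of them. -/
lemma growth (hc : G.Connected) (ht : ∀ u v : V, ∃ φ : G ≃g G, φ u = v) (o : V) {k R : ℕ}
    (hkR : k ≤ R) (hR : ∃ y, R ≤ G.dist o y) :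
    R * (ballF G o k).card ≤ 3 * k * (ballF G o R).card := by
  classical
  obtain ⟨y, hy⟩ := hR
  have hx : ∀ i : ℕ, ∃ x, i ≤ R → G.dist o x = i := by
    intro i
    by_cases hi : i ≤ R
    · obtain ⟨p⟩ := hc.preconnected o y
      obtain ⟨x, hx⟩ := exists_vertex_dist_eq hc o p i (by simp) (hi.trans hy)
      exact ⟨x, fun _ => hx⟩
    · exact ⟨o, fun h => absurd h hi⟩
  choose x hx using hx
  have h1 : (R - k + 1) * (ballF G o k).card ≤ 2 * k * (ballF G o R).card := by
    calc (R - k + 1) * (ballF G o k).card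
        = ∑ i ∈ Finset.range (R - k + 1), (ballF G (x i) k).card := by
          simp [card_ballF_eq hc ht o]
      _ ≤ ∑ i ∈ Finset.range (R - k + 1),
            ∑ n ∈ ballF G o R, if G.dist (x i) n < k then 1 else 0 := by
          refine Finset.sum_le_sum fun i hi => ?_
          rw [← Finset.card_filter]
          refine Finset.card_le_card fun n hn => ?_
          rw [mem_ballF] at hn
          rw [Finset.mem_filter, mem_ballF]
          rw [Finset.mem_range] at hi
          have h2 := hc.dist_triangle (u := o) (v := x i) (w := n)
          rw [hx i (by omega)] at h2
          exact ⟨by omega, hn⟩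
      _ = ∑ n ∈ ballF G o R,
            ((Finset.range (R - k + 1)).filter fun i => G.dist (x i) n < k).card := by
          rw [Finset.sum_comm]
          exact Finset.sum_congr rfl fun n _ => (Finset.card_filter _ _).symm
      _ ≤ ∑ n ∈ ballF G o R, 2 * k := by
          refine Finset.sum_le_sum fun n _ => ?_
          have : ((Finset.range (R - k + 1)).filter fun i => G.dist (x i) n < k) ⊆
              Finset.Ico (G.dist o n + 1 - k) (G.dist o n + k) := by
            intro i hi
            rw [Finset.mem_filter, Finset.mem_range] at hi
            have h2 := hc.dist_triangle (u := o) (v := x i) (w := n)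
            have h3 := hc.dist_triangle (u := o) (v := n) (w := x i)
            rw [hx i (by omega)] at h2 h3
            rw [SimpleGraph.dist_comm (u := n)] at h3
            rw [Finset.mem_Ico]
            omega
          refine (Finset.card_le_card this).trans ?_
          rw [Nat.card_Ico]
          omega
      _ = 2 * k * (ballF G o R).card := by simp [mul_comm]
  have h2 : (ballF G o k).card ≤ (ballF G o R).card :=
    Finset.card_le_card fun n hn => by rw [mem_ballF] at *; omega
  obtain ⟨d, rfl⟩ := Nat.exists_eq_add_of_le hkR
  rw [Nat.add_sub_cancel_left] at h1
  nlinarith [Nat.mul_le_mul_left k h2]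

/-! ### Averaging over the automorphism group -/

instance finite_graphIso : Finite (G ≃g G) :=
  Finite.of_injective (fun φ : G ≃g G => (φ : V → V)) DFunLike.coe_injective

/-- For a transitive action, averaging over the group amounts to averaging over the vertices. -/
lemma card_mul_sum_iso [Fintype (G ≃g G)] (ht : ∀ u v : V, ∃ φ : G ≃g G, φ u = v)
    (h : V → ℝ) (o : V) :
    (Fintype.card V : ℝ) * ∑ φ : G ≃g G, h (φ o) = Fintype.card (G ≃g G) * ∑ m, h m := by
  have h1 : ∀ x, ∑ φ : G ≃g G, h (φ x) = ∑ φ : G ≃g G, h (φ o) := by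
    intro x
    obtain ⟨χ, rfl⟩ := ht o x
    exact Equiv.sum_comp (Equiv.mulRight χ) (fun φ : G ≃g G => h (φ o))
  have h2 : ∀ φ : G ≃g G, ∑ x, h (φ x) = ∑ m, h m := fun φ => Equiv.sum_comp φ.toEquiv h
  calc (Fintype.card V : ℝ) * ∑ φ : G ≃g G, h (φ o)
      = ∑ x : V, ∑ φ : G ≃g G, h (φ x) := by simp [h1]
    _ = ∑ φ : G ≃g G, ∑ x : V, h (φ x) := Finset.sum_comm
    _ = _ := by simp [h2]

lemma totalGrad_nonneg (f : V → ℝ) : 0 ≤ totalGrad G f := by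
  unfold totalGrad
  refine Finset.sum_nonneg fun m _ => Finset.sum_nonneg fun n _ => ?_
  split_ifs <;> positivity

/-- Transport estimate: the mean of `|f (φ u) - f (φ v)|` over all automorphisms `φ` is controlled
edge by edge along a walk from `u` to `v`. -/
lemma transport_walk [Fintype (G ≃g G)] (ht : ∀ u v : V, ∃ φ : G ≃g G, φ u = v)
    (f : V → ℝ) {u v : V} (p : G.Walk u v) :
    (Fintype.card V : ℝ) * ∑ φ : G ≃g G, |f (φ u) - f (φ v)| ≤
      p.length * (Fintype.card (G ≃g G) * totalGrad G f) := by
  classical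
  induction p with
  | nil => simp
  | @cons a b c h p ih =>
    have h1 : (Fintype.card V : ℝ) * ∑ φ : G ≃g G, |f (φ a) - f (φ b)| ≤
        Fintype.card (G ≃g G) * totalGrad G f := by
      unfold totalGrad
      rw [← card_mul_sum_iso ht (fun m => ∑ n, if G.Adj m n then |f m - f n| else 0) a]
      refine mul_le_mul_of_nonneg_left (Finset.sum_le_sum fun φ _ => ?_) (by positivity)
      have hadj : G.Adj (φ a) (φ b) := φ.map_adj_iff.2 h
      have := Finset.single_le_sum
        (f := fun n => if G.Adj (φ a) n then |f (φ a) - f n| else 0) (s := Finset.univ)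
        (fun n _ => by split_ifs <;> positivity) (Finset.mem_univ (φ b))
      simpa [hadj] using this
    have h2 : ∑ φ : G ≃g G, |f (φ a) - f (φ c)| ≤
        ∑ φ : G ≃g G, |f (φ a) - f (φ b)| + ∑ φ : G ≃g G, |f (φ b) - f (φ c)| := by
      rw [← Finset.sum_add_distrib]
      exact Finset.sum_le_sum fun φ _ => abs_sub_le _ _ _
    have h3 := mul_le_mul_of_nonneg_left h2 (Nat.cast_nonneg (α := ℝ) (Fintype.card V))
    rw [SimpleGraph.Walk.length_cons]
    push_cast
    linarith

lemma sum_ind (A : Finset V) : ∑ m, ind A m = A.card := by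
  classical
  simp [ind]

/-! ### Isoperimetry -/

/-- If balls of radius `R` have at least twice the volume of `A`, then `|A| ≤ 2 R |∂A|`: moved by a
random automorphism, a ball centred in `A` has at least half of its points outside `A`. -/
lemma isoperimetric (hc : G.Connected) (ht : ∀ u v : V, ∃ φ : G ≃g G, φ u = v) (o : V)
    (A : Finset V) {R : ℕ} (hR : 2 * A.card ≤ (ballF G o R).card) :
    (A.card : ℝ) ≤ 2 * R * totalGrad G (ind A) := by
  classical
  have := Fintype.ofFinite (G ≃g G)
  set B := ballF G o R with hB
  set D := totalGrad G (ind A) with hD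
  have hD0 : 0 ≤ D := totalGrad_nonneg _
  set N : ℝ := (Fintype.card V : ℝ) with hN
  set K : ℝ := (Fintype.card (G ≃g G) : ℝ) with hK
  have hK0 : 0 < K := by
    have : Nonempty (G ≃g G) := ⟨SimpleGraph.Iso.refl⟩
    rw [hK]; exact_mod_cast Fintype.card_pos
  by_cases hB0 : B.card = 0
  · have : A.card = 0 := by omega
    rw [this]
    push_cast
    positivity
  have hBpos : (0 : ℝ) < B.card := by exact_mod_cast Nat.pos_of_ne_zero hB0
  have hR' : 2 * (A.card : ℝ) ≤ B.card := by exact_mod_cast hR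
  have upper : N * ∑ y ∈ B, ∑ φ : G ≃g G, |ind A (φ o) - ind A (φ y)| ≤
      B.card * (R * (K * D)) := by
    rw [Finset.mul_sum, ← nsmul_eq_mul, ← Finset.sum_const]
    refine Finset.sum_le_sum fun y hy => ?_
    obtain ⟨p, hp⟩ := hc.exists_walk_length_eq_dist o y
    refine (transport_walk ht (ind A) p).trans ?_
    refine mul_le_mul_of_nonneg_right ?_ (by positivity)
    rw [hB, mem_ballF] at hy
    rw [hp]
    exact_mod_cast hy.le
  have lower : K * A.card * (B.card - A.card) ≤
      N * ∑ y ∈ B, ∑ φ : G ≃g G, |ind A (φ o) - ind A (φ y)| := by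
    have h1 := card_mul_sum_iso ht (ind A) o
    rw [sum_ind] at h1
    rw [← h1, Finset.sum_comm, mul_assoc, Finset.sum_mul]
    refine mul_le_mul_of_nonneg_left (Finset.sum_le_sum fun φ _ => ?_) (by positivity)
    by_cases ho : φ o ∈ A
    · have h2 : ∑ y ∈ B, ind A (φ y) ≤ A.card := by
        rw [← sum_ind A, ← Equiv.sum_comp φ.toEquiv (ind A)]
        refine Finset.sum_le_sum_of_subset_of_nonneg (Finset.subset_univ _) fun i _ _ => ?_
        unfold ind
        split_ifs <;> simp
      have h3 : ∑ y ∈ B, (1 - ind A (φ y)) ≤ ∑ y ∈ B, |ind A (φ o) - ind A (φ y)| := by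
        refine Finset.sum_le_sum fun y _ => ?_
        have : ind A (φ o) = 1 := by simp [ind, ho]
        rw [this]
        exact le_abs_self _
      rw [Finset.sum_sub_distrib] at h3
      simp only [Finset.sum_const, nsmul_eq_mul, mul_one] at h3
      have : ind A (φ o) = 1 := by simp [ind, ho]
      rw [this] at h3 ⊢
      linarith
    · have : ind A (φ o) = 0 := by simp [ind, ho]
      rw [this, zero_mul]
      exact Finset.sum_nonneg fun _ _ => abs_nonneg _
  have h4 : K * B.card * A.card ≤ K * B.card * (2 * R * D) := by
    have : K * A.card * B.card ≤ 2 * (K * A.card * (B.card - A.card)) := by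
      have : 0 ≤ K * (A.card : ℝ) := by positivity
      nlinarith
    linarith
  exact le_of_mul_le_mul_left h4 (by positivity)

/-- The inequality for indicator functions. Let `R` be least with `Γ(R) ≥ 2|A|`. If `R ≤ k`, the
isoperimetric inequality suffices. Otherwise the linear growth of balls between the radii `k` and
`R - 1` bounds `|E| ≤ Γ(k)` by a multiple of `(k / R) |A|`. -/
lemma indicator_estimate (hc : G.Connected) (ht : ∀ u v : V, ∃ φ : G ≃g G, φ u = v) (o : V)
    (A E : Finset V) {k : ℕ} (hA : 2 * A.card ≤ Fintype.card V)
    (hE : E.card ≤ (ballF G o k).card) :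
    ∑ m ∈ E, ind A m ≤ 24 * k * totalGrad G (ind A) := by
  classical
  have hD0 : 0 ≤ totalGrad G (ind A) := totalGrad_nonneg _
  have hsA : ∑ m ∈ E, ind A m ≤ A.card := by
    rw [← sum_ind A]
    refine Finset.sum_le_sum_of_subset_of_nonneg (Finset.subset_univ _) fun i _ _ => ?_
    unfold ind
    split_ifs <;> simp
  have hsE : ∑ m ∈ E, ind A m ≤ E.card := by
    have : ∑ m ∈ E, ind A m ≤ ∑ m ∈ E, (1 : ℝ) :=
      Finset.sum_le_sum fun m _ => by unfold ind; split_ifs <;> simp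
    simpa using this
  by_cases hA0 : A.card = 0
  · rw [hA0] at hsA
    refine hsA.trans ?_
    push_cast
    positivity
  have hex : ∃ R, 2 * A.card ≤ (ballF G o R).card := by
    refine ⟨(Finset.univ.sup fun y => G.dist o y) + 1, ?_⟩
    have : ballF G o ((Finset.univ.sup fun y => G.dist o y) + 1) = Finset.univ := by
      ext y
      simp only [mem_ballF, Finset.mem_univ, iff_true]
      exact Nat.lt_succ_of_le (Finset.le_sup (f := fun y => G.dist o y) (Finset.mem_univ y))
    rwa [this, Finset.card_univ]
  have hiso := isoperimetric hc ht o A (Nat.find_spec hex)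
  have hmin : ∀ Q, Q < Nat.find hex → (ballF G o Q).card < 2 * A.card := fun Q hQ => by
    have := Nat.find_min hex hQ
    omega
  have hspec := Nat.find_spec hex
  generalize Nat.find hex = R at hiso hmin hspec
  have hb1 : (ballF G o 1).card ≤ 1 := by
    rw [Finset.card_le_one]
    intro a ha b hb
    rw [mem_ballF, Nat.lt_one_iff, hc.dist_eq_zero_iff] at ha hb
    rw [← ha, ← hb]
  have hb0 : (ballF G o 0).card = 0 := by simp [ballF]
  obtain ⟨Q, rfl⟩ : ∃ Q, R = Q + 1 := by
    refine Nat.exists_eq_succ_of_ne_zero ?_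
    rintro rfl
    omega
  have hQ : 1 ≤ Q := by
    by_contra hQ
    obtain rfl : Q = 0 := by omega
    rw [zero_add] at hspec
    omega
  have hQ' : (1 : ℝ) ≤ Q := by exact_mod_cast hQ
  push_cast at hiso
  rcases lt_or_ge Q k with hlt | hge
  · have : (Q : ℝ) + 1 ≤ k := by exact_mod_cast hlt
    have := mul_le_mul_of_nonneg_right this hD0
    have : 0 ≤ (k : ℝ) * totalGrad G (ind A) := by positivity
    linarith
  · have hlt := hmin Q (Nat.lt_succ_self Q)
    have hfar : ∃ y, Q ≤ G.dist o y := by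
      by_contra! hcon
      have : ballF G o Q = Finset.univ := by
        ext y
        simp [mem_ballF, hcon y]
      rw [this, Finset.card_univ] at hlt
      omega
    have hg := growth hc ht o hge hfar
    have h1 : Q * E.card ≤ 6 * k * A.card := by
      calc Q * E.card ≤ Q * (ballF G o k).card := Nat.mul_le_mul_left _ hE
        _ ≤ 3 * k * (ballF G o Q).card := hg
        _ ≤ 3 * k * (2 * A.card) := Nat.mul_le_mul_left _ hlt.le
        _ = 6 * k * A.card := by ring
    have h2 : (Q : ℝ) * E.card ≤ 6 * k * A.card := by exact_mod_cast h1
    have h3 : (A.card : ℝ) ≤ 4 * Q * totalGrad G (ind A) := by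
      nlinarith
    have h4 : (Q : ℝ) * E.card ≤ Q * (24 * k * totalGrad G (ind A)) := by
      have := mul_le_mul_of_nonneg_left h3 (by positivity : (0 : ℝ) ≤ 6 * k)
      linarith
    exact hsE.trans (le_of_mul_le_mul_left h4 (by linarith))

/-! ### From sets to functions -/

/-- Co-area argument, one level at a time: subtracting the least positive value `ε` on the support
`A` of `g` splits `g` as `ε 1_A + g'`, the total gradient is additive for this splitting, and `g'`
has smaller support. -/
lemma coarea_estimate (hc : G.Connected) (ht : ∀ u v : V, ∃ φ : G ≃g G, φ u = v) (o : V)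
    (E : Finset V) {k : ℕ} (hE : E.card ≤ (ballF G o k).card) (s : ℕ) :
    ∀ (A : Finset V) (g : V → ℝ), A.card = s → 2 * A.card ≤ Fintype.card V →
      (∀ v ∈ A, 0 < g v) → (∀ v ∉ A, g v = 0) →
      ∑ m ∈ E, g m ≤ 24 * k * totalGrad G g := by
  classical
  induction s using Nat.strong_induction_on with
  | _ s ih =>
    intro A g hs hA hpos hzero
    rcases A.eq_empty_or_nonempty with rfl | hne
    · rw [Finset.sum_eq_zero fun m _ => hzero m (by simp)]
      have := totalGrad_nonneg (G := G) g
      positivity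
    obtain ⟨a, haA, hamin⟩ := A.exists_min_image g hne
    set ε := g a with hε
    have hε0 : 0 < ε := hpos a haA
    set g' : V → ℝ := fun v => g v - ε * ind A v with hg'
    set A' := A.filter fun v => g v ≠ ε with hA'
    have hlt : A'.card < A.card :=
      Finset.card_lt_card (Finset.filter_ssubset.2 ⟨a, haA, by simp [hε]⟩)
    have h1 := ih A'.card (hs ▸ hlt) A' g' rfl (by omega)
      (by
        intro v hv
        rw [hA', Finset.mem_filter] at hv
        have := lt_of_le_of_ne (hamin v hv.1) (Ne.symm hv.2)
        simp only [hg', ind, hv.1, if_true]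
        linarith)
      (by
        intro v hv
        by_cases hvA : v ∈ A
        · have : g v = ε := by
            by_contra hcon
            exact hv (Finset.mem_filter.2 ⟨hvA, hcon⟩)
          simp [hg', ind, hvA, this]
        · simp [hg', ind, hvA, hzero v hvA])
    have h2 := indicator_estimate hc ht o A E hA hE
    have hgrad : totalGrad G g = ε * totalGrad G (ind A) + totalGrad G g' := by
      unfold totalGrad
      rw [Finset.mul_sum, ← Finset.sum_add_distrib]
      refine Finset.sum_congr rfl fun m _ => ?_
      rw [Finset.mul_sum, ← Finset.sum_add_distrib]
      refine Finset.sum_congr rfl fun n _ => ?_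
      split_ifs
      · by_cases hm : m ∈ A <;> by_cases hn : n ∈ A
        · simp [hg', ind, hm, hn]
        · have := hamin m hm
          simp only [hg', ind, hm, hn, hzero n hn, if_true, if_false]
          rw [abs_of_nonneg, abs_of_nonneg, abs_of_nonneg] <;> linarith
        · have := hamin n hn
          simp only [hg', ind, hm, hn, hzero m hm, if_true, if_false]
          rw [abs_of_nonpos, abs_of_nonpos, abs_of_nonpos] <;> linarith
        · simp [hg', ind, hm, hn]
      · simp
    have hsum : ∑ m ∈ E, g m = ε * ∑ m ∈ E, ind A m + ∑ m ∈ E, g' m := by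
      rw [Finset.mul_sum, ← Finset.sum_add_distrib]
      exact Finset.sum_congr rfl fun m _ => by simp [hg']
    rw [hgrad, hsum]
    have := mul_le_mul_of_nonneg_left h2 hε0.le
    linarith

/-! ### The median -/

open Classical in
lemma median_upper (f : V → ℝ) :
    2 * (Finset.univ.filter fun m => median f < f m).card ≤ Fintype.card V := by
  rcases (Finset.univ.filter fun m => median f < f m).eq_empty_or_nonempty with h0 | hne
  · simp [h0]
  obtain ⟨a, ha, hmin⟩ := Finset.exists_min_image _ f hne
  simp only [Finset.mem_filter, Finset.mem_univ, true_and] at ha hmin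
  have hSne : {t : ℝ | (Nat.card V : ℝ) / 2 ≤ ({m | f m ≤ t}.ncard : ℝ)}.Nonempty := by
    obtain ⟨b, -, hb⟩ := Finset.exists_max_image Finset.univ f ⟨a, Finset.mem_univ a⟩
    refine ⟨f b, ?_⟩
    have : {m | f m ≤ f b} = Set.univ := by
      ext m
      simp [hb m (Finset.mem_univ m)]
    rw [Set.mem_ofPred_eq, this, Set.ncard_univ]
    have : (0 : ℝ) ≤ Nat.card V := by positivity
    linarith
  obtain ⟨t, ht, hta⟩ := exists_lt_of_csInf_lt hSne ha
  rw [Set.mem_ofPred_eq, Nat.card_eq_fintype_card, Set.ncard_eq_toFinset_card'] at ht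
  have h1 : (Finset.univ.filter fun m => median f < f m) ⊆ {m | f m ≤ t}.toFinsetᶜ := by
    intro m hm
    simp only [Finset.mem_filter, Finset.mem_univ, true_and] at hm
    simpa using hta.trans_le (hmin m hm)
  have h2 := Finset.card_le_card h1
  rw [Finset.card_compl] at h2
  have h3 : Fintype.card V ≤ 2 * ({m | f m ≤ t}.toFinset).card := by
    have : (Fintype.card V : ℝ) ≤ 2 * ({m | f m ≤ t}.toFinset).card := by linarith
    exact_mod_cast this
  omega

open Classical in
lemma median_lower (f : V → ℝ) :
    2 * (Finset.univ.filter fun m => f m < median f).card ≤ Fintype.card V := by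
  rcases (Finset.univ.filter fun m => f m < median f).eq_empty_or_nonempty with h0 | hne
  · simp [h0]
  obtain ⟨a, ha, hmax⟩ := Finset.exists_max_image _ f hne
  simp only [Finset.mem_filter, Finset.mem_univ, true_and] at ha hmax
  have hbdd : BddBelow {t : ℝ | (Nat.card V : ℝ) / 2 ≤ ({m | f m ≤ t}.ncard : ℝ)} := by
    obtain ⟨b, -, hb⟩ := Finset.exists_min_image Finset.univ f ⟨a, Finset.mem_univ a⟩
    refine ⟨f b, fun t ht => ?_⟩
    by_contra! hlt
    have h1 : {m | f m ≤ t} = ∅ := by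
      ext m
      simpa using hlt.trans_le (hb m (Finset.mem_univ m))
    rw [Set.mem_ofPred_eq, h1, Set.ncard_empty, Nat.card_eq_fintype_card] at ht
    have : (0 : ℝ) < Fintype.card V := by exact_mod_cast Fintype.card_pos_iff.2 ⟨a⟩
    push_cast at ht
    linarith
  have hnot := notMem_of_lt_csInf ha hbdd
  rw [Set.mem_ofPred_eq, Nat.card_eq_fintype_card, Set.ncard_eq_toFinset_card'] at hnot
  push Not at hnot
  have h1 : (Finset.univ.filter fun m => f m < median f) ⊆ {m | f m ≤ f a}.toFinset := by
    intro m hm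
    simp only [Finset.mem_filter, Finset.mem_univ, true_and] at hm
    simpa using hmax m hm
  have h2 := Finset.card_le_card h1
  have h3 : 2 * ({m | f m ≤ f a}.toFinset).card < Fintype.card V := by
    have : 2 * (({m | f m ≤ f a}.toFinset).card : ℝ) < Fintype.card V := by linarith
    exact_mod_cast this
  omega

lemma median_estimate (hc : G.Connected) (ht : ∀ u v : V, ∃ φ : G ≃g G, φ u = v) (o : V)
    (E : Finset V) {k : ℕ} (hE : E.card ≤ (ballF G o k).card) (f : V → ℝ) :
    ∑ m ∈ E, |f m - median f| ≤ 24 * k * totalGrad G f := by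
  classical
  set c := median f with hcdef
  have hp := coarea_estimate hc ht o E hE _ _ (fun m => max (f m - c) 0) rfl (median_upper f)
    (by intro v hv; simpa using hv) (by intro v hv; simpa using hv)
  have hn := coarea_estimate hc ht o E hE _ _ (fun m => max (c - f m) 0) rfl (median_lower f)
    (by intro v hv; simpa using hv) (by intro v hv; simpa using hv)
  have hsum : ∑ m ∈ E, |f m - c| =
      ∑ m ∈ E, max (f m - c) 0 + ∑ m ∈ E, max (c - f m) 0 := by
    rw [← Finset.sum_add_distrib]
    refine Finset.sum_congr rfl fun m _ => ?_
    rcases le_total (f m) c with h | h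
    · rw [abs_of_nonpos, max_eq_right, max_eq_left] <;> linarith
    · rw [abs_of_nonneg, max_eq_left, max_eq_right] <;> linarith
  have hgrad : totalGrad G f =
      totalGrad G (fun m => max (f m - c) 0) + totalGrad G (fun m => max (c - f m) 0) := by
    unfold totalGrad
    rw [← Finset.sum_add_distrib]
    refine Finset.sum_congr rfl fun m _ => ?_
    rw [← Finset.sum_add_distrib]
    refine Finset.sum_congr rfl fun n _ => ?_
    split_ifs
    · grind
    · simp
  rw [hsum, hgrad]
  linarith

end FiniteGraph

/-- Gradient estimate around the median (discrete, finite/compact case): there is a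
universal constant `C > 0` such that on every connected, locally finite,
vertex-transitive graph with finite vertex set, if `E ⊆ V` has cardinality at most
that of a ball of radius `r` (for some real `r ≥ 1`), then
`∑_{m ∈ E} |f(m) - m₀| ≤ C r ∑_{m ∈ V} |∇f|(m)`, where `m₀` is the median of `f`. -/
theorem discrete_gradient_estimate_median_finite :
    ∃ C : ℝ, 0 < C ∧
      ∀ (V : Type) (G : SimpleGraph V), Countable V → G.Connected →
        (∀ v : V, (G.neighborSet v).Finite) →
        (∀ u v : V, ∃ φ : G ≃g G, φ u = v) →
        Finite V →
        ∀ (E : Set V) (r : ℝ), 1 ≤ r →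
        (∀ m₀ : V, E.ncard ≤ {n | (G.dist m₀ n : ℝ) < r}.ncard) →
        ∀ f : V → ℝ,
          (∑ᶠ m ∈ E, |f m - median f|) ≤ C * r * ∑ᶠ m, gradAbs G f m := by
  classical
  refine ⟨48, by norm_num, ?_⟩
  intro V G _ hc _ ht hfin E r hr hE f
  have := Fintype.ofFinite V
  obtain ⟨o⟩ := hc.nonempty
  -- A ball of real radius `r` is a ball of radius `⌈r⌉₊`, and `⌈r⌉₊ ≤ 2 r` because `1 ≤ r`.
  have hball : {n | (G.dist o n : ℝ) < r} = (ballF G o ⌈r⌉₊ : Set V) := by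
    ext n
    rw [Finset.mem_coe, mem_ballF, Set.mem_ofPred_eq, Nat.lt_ceil]
  have hE' : E.toFinset.card ≤ (ballF G o ⌈r⌉₊).card := by
    have := hE o
    rwa [hball, Set.ncard_coe_finset, Set.ncard_eq_toFinset_card'] at this
  have hmain := median_estimate hc ht o E.toFinset hE' f
  have hk : (⌈r⌉₊ : ℝ) ≤ 2 * r := by
    have := Nat.ceil_lt_add_one (by linarith : 0 ≤ r)
    linarith
  have hgrad : ∑ᶠ m, gradAbs G f m = totalGrad G f := by
    rw [finsum_eq_sum_of_fintype]
    unfold totalGrad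
    refine Finset.sum_congr rfl fun m _ => ?_
    unfold gradAbs
    rw [finsum_mem_eq_toFinset_sum, ← Finset.sum_filter]
    refine Finset.sum_congr ?_ fun _ _ => rfl
    ext n
    simp
  rw [hgrad, finsum_mem_eq_toFinset_sum]
  refine hmain.trans (mul_le_mul_of_nonneg_right ?_ (totalGrad_nonneg f))
  linarith
end
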